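/- If V is a Borel divergence-free vector field on [0,T] × ℝ^d with ∫₀ᵀ‖V_t‖_∞ dt < ∞, then for each S ∈ [0,T] and Lebesgue-almost every x ∈ ℝ^d, there exists a solution γ of the ODE γ' = V(t,γ) on [0,T] with γ(S) = x. -/

import Mathlib

open MeasureTheory Set
open scoped ENNReal NNReal Topology

noncomputable section

/-- A solution of the ODE `γ' = V(t,γ)` on `[0,T]`, in integral form. -/
def IsSolution {d : ℕ} (T : ℝ) (hT : 0 ≤ T)
    (V : ℝ → EuclideanSpace ℝ (Fin d) → EuclideanSpace ℝ (Fin d))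
    (γ : C(Set.Icc (0:ℝ) T, EuclideanSpace ℝ (Fin d))) : Prop :=
  ∀ t : Set.Icc (0:ℝ) T,
    γ t - γ ⟨0, Set.left_mem_Icc.mpr hT⟩ =
      ∫ s in (0:ℝ)..(t:ℝ), V s (γ (Set.projIcc 0 T hT s))

set_option linter.unusedSectionVars false

open Filter Convolution ContDiff

section DetBound

variable {E : Type*} [NormedAddCommGroup E] [NormedSpace ℝ E] [FiniteDimensional ℝ E]

/-- The determinant is flat at the identity in trace-free directions. -/
theorem exists_one_sub_le_det_one_add {η : ℝ} (hη : 0 < η) :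
    ∃ r > 0, ∀ A : E →L[ℝ] E, ‖A‖ ≤ r → LinearMap.trace ℝ E A = 0 →
      1 - η * ‖A‖ ≤ (1 + A).det := by
  classical
  let b := Module.finBasis ℝ E
  let toMat : (E →L[ℝ] E) →ₗ[ℝ] Matrix _ _ ℝ :=
    (LinearMap.toMatrix b b).toLinearMap ∘ₗ ContinuousLinearMap.coeLM ℝ
  have htoMat : ∀ A : E →L[ℝ] E, toMat A = LinearMap.toMatrix b b A := fun _ => rfl
  let f : (E →L[ℝ] E) → ℝ := fun A => Matrix.det (1 + toMat A)
  have hf : ∀ A : E →L[ℝ] E, f A = (1 + A).det := by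
    intro A
    simp only [f, htoMat, ContinuousLinearMap.det]
    rw [← LinearMap.det_toMatrix b]
    congr 1
    simp [LinearMap.toMatrix_one]
  have hentry : ∀ i j, ContDiff ℝ 1 fun A : E →L[ℝ] E => (1 + toMat A) i j := by
    intro i j
    let l : (E →L[ℝ] E) →ₗ[ℝ] ℝ :=
      { toFun := fun A => toMat A i j
        map_add' := by intros; simp
        map_smul' := by intros; simp }
    exact contDiff_const.add (LinearMap.toContinuousLinearMap l).contDiff
  have hdiff : DifferentiableAt ℝ f 0 := by
    simp only [f, Matrix.det_apply']
    apply Differentiable.differentiableAt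
    refine Differentiable.fun_sum fun σ _ => Differentiable.const_mul ?_ _
    exact (contDiff_prod fun i _ => hentry (σ i) i).differentiable one_ne_zero
  have hzero : ∀ A : E →L[ℝ] E, LinearMap.trace ℝ E A = 0 → fderiv ℝ f 0 A = 0 := by
    intro A hA
    have h1 : HasDerivAt (fun t : ℝ => f (t • A)) (fderiv ℝ f 0 A) 0 := by
      have := (hdiff.hasFDerivAt).comp_hasDerivAt_of_eq (0 : ℝ)
        ((hasDerivAt_id (0 : ℝ)).smul_const A) (by simp)
      simpa [Function.comp_def] using this
    have h2 : HasDerivAt (fun t : ℝ => f (t • A)) 0 0 := by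
      have h3 : (fun t : ℝ => f (t • A)) = fun t =>
          1 + (Matrix.det (1 + (Polynomial.X : Polynomial ℝ) •
            (toMat A).map Polynomial.C)).divX.divX.eval t * t ^ 2 := by
        funext t
        have : Matrix.trace (toMat A) = 0 := by
          rw [htoMat, ← LinearMap.trace_eq_matrix_trace]; exact hA
        simp only [f, map_smul]
        rw [Matrix.det_one_add_smul, this]; simp
      rw [h3]
      have := ((Polynomial.hasDerivAt (Matrix.det (1 + (Polynomial.X : Polynomial ℝ) •
            (toMat A).map Polynomial.C)).divX.divX 0).mul
            ((hasDerivAt_id (0 : ℝ)).pow 2)).const_add 1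
      simpa using this
    exact h1.unique h2
  have hlit := (hdiff.hasFDerivAt.isLittleO.def hη)
  obtain ⟨r, hr, hball⟩ := Metric.eventually_nhds_iff_ball.1 hlit
  refine ⟨r / 2, by positivity, fun A hAr hA => ?_⟩
  have h := hball A (by simp; linarith)
  have h0 : f 0 = 1 := by simp [f]
  rw [sub_zero, hzero A hA, h0, sub_zero, Real.norm_eq_abs, hf] at h
  linarith [(abs_le.1 h).1]

end DetBound

section Mollify

variable {E : Type*} [NormedAddCommGroup E] [NormedSpace ℝ E] [FiniteDimensional ℝ E]
  [MeasurableSpace E] [BorelSpace E] {μ : Measure E} [μ.IsAddHaarMeasure]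

/-- A vector field is divergence-free in the sense of distributions. -/
def IsDivFree (μ : Measure E) (U : E → E) : Prop :=
  ∀ u : E → ℝ, ContDiff ℝ ∞ u → HasCompactSupport u → ∫ x, fderiv ℝ u x (U x) ∂μ = 0

theorem locallyIntegrable_of_bounded {U : E → E} (hU : Measurable U) {δ : ℝ}
    (hδ : ∀ x, ‖U x‖ ≤ δ) : LocallyIntegrable U μ :=
  (locallyIntegrable_const δ).mono hU.aestronglyMeasurable
    (Eventually.of_forall fun x => (hδ x).trans (le_abs_self δ))

/-- Mollification of a vector field. -/
def mollify (μ : Measure E) (ρ : E → ℝ) (U : E → E) : E → E :=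
  fun x => ∫ z, ρ z • U (x - z) ∂μ

theorem mollify_eq_convolution (ρ : E → ℝ) (U : E → E) :
    mollify μ ρ U = ρ ⋆[ContinuousLinearMap.lsmul ℝ ℝ, μ] U := rfl

theorem mollify_hasFDerivAt {ρ : E → ℝ} (hρ : ContDiff ℝ ∞ ρ) (hρc : HasCompactSupport ρ)
    {U : E → E} (hU : Measurable U) {δ : ℝ} (hδ : ∀ x, ‖U x‖ ≤ δ) (x : E) :
    HasFDerivAt (mollify μ ρ U) (∫ z, (fderiv ℝ ρ z).smulRight (U (x - z)) ∂μ) x := by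
  have := hρc.hasFDerivAt_convolution_left (ContinuousLinearMap.lsmul ℝ ℝ) (μ := μ)
    (hρ.of_le (by simp))
    (locallyIntegrable_of_bounded hU hδ) x
  rw [mollify_eq_convolution]
  convert this using 1
  rw [convolution]
  congr 1

theorem integrable_fderiv_smulRight {ρ : E → ℝ} (hρ : ContDiff ℝ ∞ ρ) (hρc : HasCompactSupport ρ)
    {U : E → E} (hU : Measurable U) {δ : ℝ}
    (hδ : ∀ x, ‖U x‖ ≤ δ) (x : E) :
    Integrable (fun z => (fderiv ℝ ρ z).smulRight (U (x - z))) μ := by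
  have hi : Integrable (fderiv ℝ ρ) μ :=
    (hρ.continuous_fderiv (by simp)).integrable_of_hasCompactSupport (hρc.fderiv (𝕜 := ℝ))
  refine (hi.norm.mul_const δ).mono' ?_ (Eventually.of_forall fun z => ?_)
  · exact (ContinuousLinearMap.smulRightL ℝ E E).aestronglyMeasurable_comp₂ hi.1
      (hU.comp (measurable_const.sub measurable_id)).aestronglyMeasurable
  · rw [ContinuousLinearMap.norm_smulRight_apply]
    gcongr
    exact hδ _

theorem norm_mollify_fderiv_le {ρ : E → ℝ} (hρ : ContDiff ℝ ∞ ρ) (hρc : HasCompactSupport ρ)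
    {U : E → E} {δ : ℝ} (hδ : ∀ x, ‖U x‖ ≤ δ) (x : E) :
    ‖∫ z, (fderiv ℝ ρ z).smulRight (U (x - z)) ∂μ‖ ≤ (∫ z, ‖fderiv ℝ ρ z‖ ∂μ) * δ := by
  have hi : Integrable (fderiv ℝ ρ) μ :=
    (hρ.continuous_fderiv (by simp)).integrable_of_hasCompactSupport (hρc.fderiv (𝕜 := ℝ))
  rw [← integral_mul_const]
  refine norm_integral_le_of_norm_le (hi.norm.mul_const δ) (Eventually.of_forall fun z => ?_)
  rw [ContinuousLinearMap.norm_smulRight_apply]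
  gcongr
  exact hδ _

theorem trace_mollify_fderiv {ρ : E → ℝ} (hρ : ContDiff ℝ ∞ ρ) (hρc : HasCompactSupport ρ)
    {U : E → E} (hU : Measurable U) {δ : ℝ}
    (hδ : ∀ x, ‖U x‖ ≤ δ) (hdiv : IsDivFree μ U) (x : E) :
    LinearMap.trace ℝ E (∫ z, (fderiv ℝ ρ z).smulRight (U (x - z)) ∂μ : E →L[ℝ] E) = 0 := by
  let tr : (E →L[ℝ] E) →L[ℝ] ℝ := LinearMap.toContinuousLinearMap
    (LinearMap.trace ℝ E ∘ₗ ContinuousLinearMap.coeLM ℝ)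
  have h := tr.integral_comp_comm (integrable_fderiv_smulRight (μ := μ) hρ hρc hU hδ x)
  change tr _ = 0
  rw [← h]
  have h1 : ∀ z, tr ((fderiv ℝ ρ z).smulRight (U (x - z))) = fderiv ℝ ρ z (U (x - z)) :=
    fun z => LinearMap.trace_smulRight _ _
  simp_rw [h1]
  have h2 := hdiv (fun y => ρ (x - y)) (hρ.comp (contDiff_const.sub contDiff_id))
    (hρc.comp_homeomorph (Homeomorph.subLeft x))
  rw [← integral_sub_left_eq_self _ μ x]
  simp only [sub_sub_cancel]
  have h3 : ∀ y, fderiv ℝ (fun y => ρ (x - y)) y (U y) = - fderiv ℝ ρ (x - y) (U y) := by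
    intro y
    have hd : HasFDerivAt (fun y => ρ (x - y))
        ((fderiv ℝ ρ (x - y)).comp (-ContinuousLinearMap.id ℝ E)) y :=
      ((hρ.differentiable (by simp)) (x - y)).hasFDerivAt.comp y ((hasFDerivAt_id y).const_sub x)
    rw [hd.fderiv]; simp
  simp_rw [h3, integral_neg, neg_eq_zero] at h2
  exact h2

theorem mollify_sub_le {ρ : E → ℝ} (hρ : ContDiff ℝ ∞ ρ) (hρc : HasCompactSupport ρ)
    {U : E → E} (hU : Measurable U) {δ : ℝ} (hδ : ∀ x, ‖U x‖ ≤ δ) (x y : E) :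
    ‖mollify μ ρ U x - mollify μ ρ U y‖ ≤ (∫ z, ‖fderiv ℝ ρ z‖ ∂μ) * δ * ‖x - y‖ :=
  convex_univ.norm_image_sub_le_of_norm_hasFDerivWithin_le
    (fun z _ => (mollify_hasFDerivAt hρ hρc hU hδ z).hasFDerivWithinAt)
    (fun z _ => norm_mollify_fderiv_le hρ hρc hδ z) (mem_univ y) (mem_univ x)

/-- A small displacement along a mollified divergence-free field almost preserves measure. -/
theorem exists_measure_preimage_le {ρ : E → ℝ} (hρ : ContDiff ℝ ∞ ρ) (hρc : HasCompactSupport ρ)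
    {η : ℝ} (hη : 0 < η) :
    ∃ δ₀ > 0, ∀ (U : E → E) (δ : ℝ), Measurable U → IsDivFree μ U → (∀ x, ‖U x‖ ≤ δ) → δ ≤ δ₀ →
      ∀ A, MeasurableSet A →
        μ ((fun x => x + mollify μ ρ U x) ⁻¹' A) ≤ ENNReal.ofReal (Real.exp (η * δ)) * μ A := by
  set L := ∫ z, ‖fderiv ℝ ρ z‖ ∂μ with hL
  have hL0 : 0 ≤ L := integral_nonneg fun _ => norm_nonneg _
  have hη' : 0 < η / (2 * (L + 1)) := by positivity
  obtain ⟨r, hr, hdet⟩ := exists_one_sub_le_det_one_add (E := E) hη'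
  refine ⟨min (min (r / (L + 1)) (1 / (2 * (L + 1)))) (1 / η), by positivity,
    fun U δ hU hdiv hδ hδ₀ A hA => ?_⟩
  have hδ0 : 0 ≤ δ := (norm_nonneg _).trans (hδ 0)
  have hδ1 : (L + 1) * δ ≤ r := by
    have := hδ₀.trans ((min_le_left _ _).trans (min_le_left _ _))
    rw [le_div_iff₀ (by positivity)] at this; linarith
  have hδ2 : (L + 1) * δ ≤ 1 / 2 := by
    have := hδ₀.trans ((min_le_left _ _).trans (min_le_right _ _))
    rw [le_div_iff₀ (by positivity)] at this; linarith
  have hδ3 : η * δ ≤ 1 := by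
    have := hδ₀.trans (min_le_right _ _)
    rw [le_div_iff₀ hη] at this; linarith
  set Φ : E → E := fun x => x + mollify μ ρ U x
  set B : E → E →L[ℝ] E := fun x => ∫ z, (fderiv ℝ ρ z).smulRight (U (x - z)) ∂μ
  have hΦ : ∀ x, HasFDerivAt Φ (1 + B x) x := fun x =>
    (hasFDerivAt_id x).add (mollify_hasFDerivAt hρ hρc hU hδ x)
  have hΦc : Continuous Φ := continuous_iff_continuousAt.2 fun x => (hΦ x).continuousAt
  have hinj : Function.Injective Φ := by
    intro x y hxy
    have h1 := mollify_sub_le (μ := μ) hρ hρc hU hδ x y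
    have h2 : mollify μ ρ U x - mollify μ ρ U y = y - x := by
      have : x + mollify μ ρ U x = y + mollify μ ρ U y := hxy
      rw [sub_eq_sub_iff_add_eq_add, add_comm, this]
    rw [h2, norm_sub_rev y x] at h1
    have h3 : L * δ * ‖x - y‖ ≤ 1 / 2 * ‖x - y‖ := by gcongr; nlinarith
    have h4 : ‖x - y‖ ≤ 0 := by rw [← hL] at h1; linarith
    exact sub_eq_zero.1 (norm_le_zero_iff.1 h4)
  have hlow : ∀ x, Real.exp (-(η * δ)) ≤ |(1 + B x).det| := by
    intro x
    have hB : ‖B x‖ ≤ L * δ := norm_mollify_fderiv_le hρ hρc hδ x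
    have h1 := hdet (B x) (hB.trans (by nlinarith))
      (trace_mollify_fderiv (μ := μ) hρ hρc hU hδ hdiv x)
    have h2 : η / (2 * (L + 1)) * ‖B x‖ ≤ η * δ / 2 := by
      calc η / (2 * (L + 1)) * ‖B x‖ ≤ η / (2 * (L + 1)) * ((L + 1) * δ) := by
            gcongr; linarith
        _ = η * δ / 2 := by field_simp
    have h3 : Real.exp (-(η * δ)) ≤ 1 - η * δ / 2 := by
      have h0 : 0 ≤ η * δ := by positivity
      have h5 := Real.add_one_le_exp (η * δ)
      rw [Real.exp_neg, inv_le_comm₀ (Real.exp_pos _) (by linarith)]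
      refine le_trans ?_ h5
      rw [inv_le_iff_one_le_mul₀ (by linarith)]
      nlinarith
    exact h3.trans (le_trans (by linarith) (le_abs_self _))
  have hAm : MeasurableSet (Φ ⁻¹' A) := hΦc.measurable hA
  have h1 := lintegral_abs_det_fderiv_eq_addHaar_image μ hAm
    (fun x _ => (hΦ x).hasFDerivWithinAt) hinj.injOn
  have h2 : ENNReal.ofReal (Real.exp (-(η * δ))) * μ (Φ ⁻¹' A) ≤ μ A := by
    calc ENNReal.ofReal (Real.exp (-(η * δ))) * μ (Φ ⁻¹' A)
        = ∫⁻ x in Φ ⁻¹' A, ENNReal.ofReal (Real.exp (-(η * δ))) ∂μ := by simp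
      _ ≤ ∫⁻ x in Φ ⁻¹' A, ENNReal.ofReal |(1 + B x).det| ∂μ :=
          lintegral_mono fun x => ENNReal.ofReal_le_ofReal (hlow x)
      _ = μ (Φ '' (Φ ⁻¹' A)) := h1
      _ ≤ μ A := measure_mono (image_preimage_subset _ _)
  calc μ (Φ ⁻¹' A) = ENNReal.ofReal (Real.exp (η * δ)) *
        (ENNReal.ofReal (Real.exp (-(η * δ))) * μ (Φ ⁻¹' A)) := by
        rw [← mul_assoc, ← ENNReal.ofReal_mul (Real.exp_pos _).le, ← Real.exp_add]; simp
    _ ≤ _ := by gcongr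

end Mollify

section Euler

variable {E : Type*} [NormedAddCommGroup E] [NormedSpace ℝ E] [FiniteDimensional ℝ E]
  [MeasurableSpace E] [BorelSpace E] {μ : Measure E} [μ.IsAddHaarMeasure]

/-- A time-dependent field dominated by an integrable function of time. -/
structure IsDominated (W : ℝ → E → E) (m : ℝ → ℝ) : Prop where
  meas : Measurable (Function.uncurry W)
  int : Integrable m
  bound : ∀ t x, ‖W t x‖ ≤ m t

namespace IsDominated

variable {W : ℝ → E → E} {m : ℝ → ℝ}

theorem nonneg (hW : IsDominated W m) (t : ℝ) : 0 ≤ m t := (norm_nonneg _).trans (hW.bound t 0)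

theorem intervalIntegrable (hW : IsDominated W m) (a b : ℝ) :
    IntervalIntegrable m volume a b :=
  hW.int.intervalIntegrable

theorem integral_mono (hW : IsDominated W m) {a b c e : ℝ} (hca : c ≤ a) (hab : a ≤ b)
    (hbe : b ≤ e) :
    ∫ r in a..b, m r ≤ ∫ r in c..e, m r :=
  intervalIntegral.integral_mono_interval hca hab hbe (Eventually.of_forall hW.nonneg)
    (hW.intervalIntegrable _ _)

theorem integral_nonneg (hW : IsDominated W m) {a b : ℝ} (hab : a ≤ b) : 0 ≤ ∫ r in a..b, m r :=
  intervalIntegral.integral_nonneg hab fun t _ => hW.nonneg t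

theorem integrable_comp (hW : IsDominated W m) {γ : ℝ → E} (hγ : Measurable γ) :
    Integrable fun r => W r (γ r) :=
  hW.int.mono' (hW.meas.comp (measurable_id.prodMk hγ)).aestronglyMeasurable
    (Eventually.of_forall fun r => hW.bound r _)

theorem norm_integral_comp_le (hW : IsDominated W m) {γ : ℝ → E} {a b : ℝ} (hab : a ≤ b) :
    ‖∫ r in a..b, W r (γ r)‖ ≤ ∫ r in a..b, m r :=
  intervalIntegral.norm_integral_le_of_norm_le hab
    (Eventually.of_forall fun r _ => hW.bound r _) (hW.intervalIntegrable _ _)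

theorem continuous_of_modulus (hW : IsDominated W m) {γ : ℝ → E}
    (h : ∀ r s, r ≤ s → ‖γ s - γ r‖ ≤ ∫ τ in r..s, m τ) : Continuous γ := by
  have hF : Continuous fun t => ∫ τ in (0 : ℝ)..t, m τ :=
    intervalIntegral.continuous_primitive hW.intervalIntegrable 0
  refine continuous_iff_continuousAt.2 fun t => ?_
  rw [ContinuousAt, tendsto_iff_norm_sub_tendsto_zero]
  have hlim : Tendsto (fun s => |(∫ τ in (0 : ℝ)..s, m τ) - ∫ τ in (0 : ℝ)..t, m τ|)
      (𝓝 t) (𝓝 0) := by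
    have := ((hF.sub continuous_const).abs).tendsto (x := t)
      (f := fun s => |(∫ τ in (0 : ℝ)..s, m τ) - ∫ τ in (0 : ℝ)..t, m τ|)
    simpa using this
  refine squeeze_zero (fun _ => norm_nonneg _) (fun s => ?_) hlim
  rw [intervalIntegral.integral_interval_sub_left (hW.intervalIntegrable _ _)
    (hW.intervalIntegrable _ _)]
  rcases le_total t s with hts | hst
  · exact (h t s hts).trans (le_abs_self _)
  · rw [norm_sub_rev, intervalIntegral.integral_symm, abs_neg]
    exact (h s t hst).trans (le_abs_self _)

theorem measurable_slice (hW : IsDominated W m) (t : ℝ) : Measurable (W t) :=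
  hW.meas.of_uncurry_left

theorem integrable_time (hW : IsDominated W m) (x : E) : Integrable fun r => W r x :=
  hW.integrable_comp measurable_const

theorem measurable_timeIntegral (hW : IsDominated W m) (a b : ℝ) :
    Measurable fun x => ∫ r in a..b, W r x := by
  have h : StronglyMeasurable (Function.uncurry fun x r => W r x) :=
    (hW.meas.comp measurable_swap).stronglyMeasurable
  simp only [intervalIntegral]
  exact (h.integral_prod_right (ν := volume.restrict (Ioc a b))).measurable.sub
    (h.integral_prod_right (ν := volume.restrict (Ioc b a))).measurable

theorem isDivFree_timeIntegral (hW : IsDominated W m) (hdiv : ∀ t, IsDivFree μ (W t))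
    {a b : ℝ} (hab : a ≤ b) :
    IsDivFree μ fun x => ∫ r in a..b, W r x := by
  intro u hu huc
  have hi : Integrable (fderiv ℝ u) μ :=
    (hu.continuous_fderiv (by simp)).integrable_of_hasCompactSupport (huc.fderiv (𝕜 := ℝ))
  have h1 : ∀ x, fderiv ℝ u x (∫ r in a..b, W r x) = ∫ r in Ioc a b, fderiv ℝ u x (W r x) := by
    intro x
    rw [intervalIntegral.integral_of_le hab]
    exact ((fderiv ℝ u x).integral_comp_comm (hW.integrable_time x).restrict).symm
  simp_rw [h1]
  rw [integral_integral_swap]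
  · simp [hdiv _ u hu huc]
  · refine (hi.norm.mul_prod hW.int.restrict).mono' ?_ (Eventually.of_forall fun p => ?_)
    · have hm : Measurable fun p : E × ℝ => fderiv ℝ u p.1 (W p.2 p.1) :=
        (ContinuousLinearMap.measurable_apply₂ (𝕜 := ℝ) (E := E) (F := ℝ)).comp
          (((hu.continuous_fderiv (by simp)).measurable.comp measurable_fst).prodMk
          (hW.meas.comp measurable_swap))
      exact hm.aestronglyMeasurable
    · exact ((fderiv ℝ u p.1).le_opNorm _).trans (by gcongr; exact hW.bound _ _)

theorem mollify_timeIntegral (hW : IsDominated W m) {ρ : E → ℝ} (hρ : Integrable ρ μ) {a b : ℝ}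
    (hab : a ≤ b) (x : E) :
    mollify μ ρ (fun y => ∫ r in a..b, W r y) x = ∫ r in a..b, mollify μ ρ (W r) x := by
  simp only [mollify, intervalIntegral.integral_of_le hab, ← integral_smul]
  rw [integral_integral_swap]
  refine (hρ.norm.mul_prod hW.int.restrict).mono' ?_ (Eventually.of_forall fun p => ?_)
  · refine (hρ.1.comp_fst).smul (Measurable.aestronglyMeasurable ?_)
    exact hW.meas.comp (measurable_snd.prodMk (measurable_const.sub measurable_fst))
  · simp only [Function.uncurry]
    rw [norm_smul]; gcongr; exact hW.bound _ _

theorem mollify (hW : IsDominated W m) {ρ : E → ℝ} (hρ : Continuous ρ) (hρ0 : ∀ z, 0 ≤ ρ z)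
    (hρ1 : ∫ z, ρ z ∂μ = 1) : IsDominated (fun t => mollify μ ρ (W t)) m where
  meas := by
    have h : StronglyMeasurable (Function.uncurry fun (p : ℝ × E) (z : E) =>
        ρ z • W p.1 (p.2 - z)) := by
      refine Measurable.stronglyMeasurable ?_
      exact (hρ.measurable.comp measurable_snd).smul (hW.meas.comp
        ((measurable_fst.comp measurable_fst).prodMk
          ((measurable_snd.comp measurable_fst).sub measurable_snd)))
    exact (h.integral_prod_right (ν := μ)).measurable
  int := hW.int
  bound := by
    intro t x
    have hi : Integrable ρ μ := integrable_of_integral_eq_one hρ1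
    calc ‖_root_.mollify μ ρ (W t) x‖ ≤ ∫ z, ρ z * m t ∂μ := by
          refine norm_integral_le_of_norm_le (hi.mul_const _) (Eventually.of_forall fun z => ?_)
          rw [norm_smul, Real.norm_of_nonneg (hρ0 z)]
          exact mul_le_mul_of_nonneg_left (hW.bound _ _) (hρ0 z)
      _ = m t := by rw [integral_mul_const, hρ1, one_mul]

end IsDominated

end Euler

section EulerScheme

variable {E : Type*} [NormedAddCommGroup E] [NormedSpace ℝ E] [FiniteDimensional ℝ E]
  [MeasurableSpace E] [BorelSpace E] {μ : Measure E} [μ.IsAddHaarMeasure]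

/-- An approximate flow of `b` on `[0, a]`, stationary outside this interval. -/
structure IsApproxFlow (μ : Measure E) (b : ℝ → E → E) (m : ℝ → ℝ) (η c a : ℝ)
    (X : ℝ → E → E) : Prop where
  meas : ∀ s, Measurable (X s)
  initial : ∀ s ≤ 0, ∀ x, X s x = x
  const : ∀ s, a ≤ s → ∀ x, X s x = X a x
  modulus : ∀ x r s, r ≤ s → ‖X s x - X r x‖ ≤ ∫ τ in r..s, m τ
  density : ∀ s, 0 ≤ s → ∀ A, MeasurableSet A →
    μ (X s ⁻¹' A) ≤ ENNReal.ofReal (Real.exp (η * ∫ τ in (0 : ℝ)..(min s a), m τ)) * μ A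
  error : ∀ s, 0 ≤ s → ∀ x, ‖X s x - x - ∫ r in (0 : ℝ)..(min s a), b r (X r x)‖ ≤
    c * ∫ τ in (0 : ℝ)..(min s a), m τ

theorem isApproxFlow_zero {b : ℝ → E → E} {m : ℝ → ℝ} (hb : IsDominated b m) (η c : ℝ) :
    IsApproxFlow μ b m η c 0 (fun _ x => x) where
  meas _ := measurable_id
  initial _ _ _ := rfl
  const _ _ _ := rfl
  modulus x r s hrs := by simpa using hb.integral_nonneg hrs
  density s hs A _ := by simp [hs]
  error s hs x := by simp [hs]

/-- One step of the Euler scheme. -/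
theorem IsApproxFlow.step {b : ℝ → E → E} {m : ℝ → ℝ} (hb : IsDominated b m) {η c L δ : ℝ}
    (hL : 0 ≤ L) (hlip : ∀ r y z, ‖b r y - b r z‖ ≤ L * m r * ‖y - z‖)
    (hdens : ∀ a s, a ≤ s → ∫ τ in a..s, m τ ≤ δ → ∀ A, MeasurableSet A →
      μ ((fun x => x + ∫ r in a..s, b r x) ⁻¹' A) ≤
        ENNReal.ofReal (Real.exp (η * ∫ τ in a..s, m τ)) * μ A)
    (hc : L * δ ≤ c) {a a' : ℝ} (ha : 0 ≤ a) (haa' : a ≤ a') (hδ : ∫ τ in a..a', m τ ≤ δ)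
    {X : ℝ → E → E} (hX : IsApproxFlow μ b m η c a X) :
    ∃ X', IsApproxFlow μ b m η c a' X' := by
  set X' : ℝ → E → E := fun s x => X s x + ∫ r in (min s a)..(min s a'), b r (X s x) with hX'
  have hmin : ∀ s, min s a ≤ min s a' := fun s => min_le_min_left s haa'
  have hX'_le : ∀ s, s ≤ a → ∀ x, X' s x = X s x := by
    intro s hs x
    simp [hX', min_eq_left hs, min_eq_left (hs.trans haa')]
  have hX'_ge : ∀ s, a ≤ s → ∀ x, X' s x = X a x + ∫ r in a..(min s a'), b r (X a x) := by
    intro s hs x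
    simp [hX', min_eq_right hs, hX.const s hs]
  have hsmall : ∀ s, ∫ τ in (min s a)..(min s a'), m τ ≤ δ := by
    intro s
    rcases le_total s a with hs | hs
    · rw [min_eq_left hs, min_eq_left (hs.trans haa'), intervalIntegral.integral_same]
      exact (hb.integral_nonneg haa').trans hδ
    · rw [min_eq_right hs]
      exact (hb.integral_mono le_rfl (le_min hs haa') (min_le_right _ _)).trans hδ
  have hmod_left : ∀ x r s, r ≤ s → s ≤ a → ‖X' s x - X' r x‖ ≤ ∫ τ in r..s, m τ := by
    intro x r s hrs hs
    rw [hX'_le s hs, hX'_le r (hrs.trans hs)]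
    exact hX.modulus x r s hrs
  have hmod_right : ∀ x r s, r ≤ s → a ≤ r → ‖X' s x - X' r x‖ ≤ ∫ τ in r..s, m τ := by
    intro x r s hrs hr
    rw [hX'_ge s (hr.trans hrs), hX'_ge r hr, add_sub_add_left_eq_sub,
      intervalIntegral.integral_interval_sub_left (hb.integrable_time _).intervalIntegrable
        (hb.integrable_time _).intervalIntegrable]
    refine (hb.norm_integral_comp_le (γ := fun _ => X a x) (min_le_min_right a' hrs)).trans ?_
    rcases le_total r a' with hra | hra
    · rw [min_eq_left hra]
      exact hb.integral_mono le_rfl (le_min hrs hra) (min_le_left _ _)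
    · rw [min_eq_right hra, min_eq_right (hra.trans hrs), intervalIntegral.integral_same]
      exact hb.integral_nonneg hrs
  have hmod : ∀ x r s, r ≤ s → ‖X' s x - X' r x‖ ≤ ∫ τ in r..s, m τ := by
    intro x r s hrs
    rcases le_total s a with hs | hs
    · exact hmod_left x r s hrs hs
    rcases le_total a r with hr | hr
    · exact hmod_right x r s hrs hr
    rw [← intervalIntegral.integral_add_adjacent_intervals (hb.intervalIntegrable r a)
      (hb.intervalIntegrable a s), ← sub_add_sub_cancel (X' s x) (X' a x), add_comm]
    exact (norm_add_le _ _).trans (add_le_add (hmod_left x r a hr le_rfl)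
      (hmod_right x a s hs le_rfl))
  refine ⟨X', ?_, ?_, ?_, hmod, ?_, ?_⟩
  · intro s
    exact (hX.meas s).add ((hb.measurable_timeIntegral _ _).comp (hX.meas s))
  · intro s hs x
    rw [hX'_le s (hs.trans ha), hX.initial s hs]
  · intro s hs x
    rw [hX'_ge s (haa'.trans hs), hX'_ge a' haa', min_eq_right hs, min_self]
  · intro s hs A hA
    have hΦ : Measurable fun x => x + ∫ r in (min s a)..(min s a'), b r x :=
      measurable_id.add (hb.measurable_timeIntegral _ _)
    have h1 := hX.density s hs _ (hΦ hA)
    have h2 := hdens _ _ (hmin s) (hsmall s) A hA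
    calc μ (X' s ⁻¹' A) = μ (X s ⁻¹' ((fun x => x + ∫ r in (min s a)..(min s a'), b r x) ⁻¹' A)) :=
          rfl
      _ ≤ _ := h1.trans (mul_le_mul_right h2 _)
      _ = _ := by
        rw [← mul_assoc, ← ENNReal.ofReal_mul (Real.exp_pos _).le, ← Real.exp_add, ← mul_add,
          intervalIntegral.integral_add_adjacent_intervals (hb.intervalIntegrable _ _)
            (hb.intervalIntegrable _ _)]
  · intro s hs x
    have hcont : Continuous fun r => X r x := hb.continuous_of_modulus (hX.modulus x)
    have hcont' : Continuous fun r => X' r x := hb.continuous_of_modulus (hmod x)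
    have hint' := hb.integrable_comp hcont'.measurable
    have hsame : ∀ t, 0 ≤ t → t ≤ a →
        ∫ r in (0 : ℝ)..t, b r (X' r x) = ∫ r in (0 : ℝ)..t, b r (X r x) := by
      intro t ht hta
      refine intervalIntegral.integral_congr fun r hr => ?_
      rw [uIcc_of_le ht] at hr
      simp only [hX'_le r (hr.2.trans hta)]
    rcases le_total s a with hsa | hsa
    · have := hX.error s hs x
      rw [min_eq_left hsa] at this
      rwa [min_eq_left (hsa.trans haa'), hX'_le s hsa, hsame s hs hsa]
    · have h1 := hX.error a ha x
      rw [min_self] at h1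
      set e := min s a'
      have hae : a ≤ e := le_min hsa haa'
      have h2 : X' s x - x - ∫ r in (0 : ℝ)..e, b r (X' r x) =
          (X a x - x - ∫ r in (0 : ℝ)..a, b r (X r x)) +
            ∫ r in a..e, (b r (X a x) - b r (X' r x)) := by
        rw [intervalIntegral.integral_sub (hb.integrable_time _).intervalIntegrable
          hint'.intervalIntegrable, hX'_ge s hsa, ← hsame a ha le_rfl,
          ← intervalIntegral.integral_add_adjacent_intervals (a := 0) (b := a) (c := e)
            hint'.intervalIntegrable hint'.intervalIntegrable]
        abel
      have h3 : ‖∫ r in a..e, (b r (X a x) - b r (X' r x))‖ ≤ ∫ r in a..e, c * m r := by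
        refine intervalIntegral.norm_integral_le_of_norm_le hae
          (Eventually.of_forall fun r hr => ?_) ((hb.intervalIntegrable _ _).const_mul c)
        refine (hlip r _ _).trans ?_
        have h4 : ‖X a x - X' r x‖ ≤ δ := by
          rw [norm_sub_rev, ← hX'_le a le_rfl]
          exact (hmod x a r hr.1.le).trans ((hb.integral_mono le_rfl hr.1.le
            (hr.2.trans (min_le_right _ _))).trans hδ)
        have hm := hb.nonneg r
        calc L * m r * ‖X a x - X' r x‖ ≤ L * m r * δ := by gcongr
          _ = (L * δ) * m r := by ring
          _ ≤ c * m r := by gcongr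
      rw [h2, ← intervalIntegral.integral_add_adjacent_intervals (hb.intervalIntegrable 0 a)
        (hb.intervalIntegrable a e), mul_add]
      rw [intervalIntegral.integral_const_mul] at h3
      exact (norm_add_le _ _).trans (add_le_add h1 h3)

/-- Time can be subdivided so that the bound has small integral over each piece. -/
theorem exists_subdivision {m : ℝ → ℝ} (hm : Integrable m) {T : ℝ} (hT : 0 ≤ T)
    {δ : ℝ} (hδ : 0 < δ) : ∃ N : ℕ, 0 < N ∧ ∀ k : ℕ, k < N →
      ∫ τ in (k * (T / N) : ℝ)..((k + 1 : ℕ) * (T / N)), m τ ≤ δ := by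
  have hF : Continuous fun t => ∫ τ in (0 : ℝ)..t, m τ :=
    intervalIntegral.continuous_primitive (fun _ _ => hm.intervalIntegrable) 0
  have hu := (isCompact_Icc (a := (0 : ℝ)) (b := T)).uniformContinuousOn_of_continuous
    hF.continuousOn
  obtain ⟨ε, hε, h⟩ := Metric.uniformContinuousOn_iff.1 hu δ hδ
  obtain ⟨n, hn⟩ := exists_nat_gt (T / ε)
  refine ⟨n + 1, n.succ_pos, fun k hk => ?_⟩
  have hN : (0 : ℝ) < ((n + 1 : ℕ) : ℝ) := by positivity
  have hstep : T / ((n + 1 : ℕ) : ℝ) < ε := by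
    rw [div_lt_iff₀ hε] at hn
    rw [div_lt_iff₀ hN]; push_cast; nlinarith
  have hmem : ∀ j : ℕ, j ≤ n + 1 → (j * (T / (n + 1 : ℕ)) : ℝ) ∈ Icc (0 : ℝ) T := by
    intro j hj
    refine ⟨by positivity, ?_⟩
    have : (j : ℝ) ≤ ((n + 1 : ℕ) : ℝ) := by exact_mod_cast hj
    calc (j * (T / (n + 1 : ℕ)) : ℝ) ≤ ((n + 1 : ℕ) : ℝ) * (T / (n + 1 : ℕ)) := by gcongr
      _ = T := by field_simp
  have h1 := h _ (hmem (k + 1) hk) _ (hmem k hk.le) (by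
    rw [Real.dist_eq, ← sub_mul]
    push_cast
    rw [add_sub_cancel_left, one_mul, abs_of_nonneg (by positivity)]
    exact_mod_cast hstep)
  rw [Real.dist_eq, intervalIntegral.integral_interval_sub_left hm.intervalIntegrable
    hm.intervalIntegrable] at h1
  exact ((le_abs_self _).trans_lt h1).le

theorem exists_isApproxFlow {b : ℝ → E → E} {m : ℝ → ℝ} (hb : IsDominated b m) {η c L δ : ℝ}
    (hL : 0 ≤ L) (hlip : ∀ r y z, ‖b r y - b r z‖ ≤ L * m r * ‖y - z‖) (hδ : 0 < δ)
    (hdens : ∀ a s, a ≤ s → ∫ τ in a..s, m τ ≤ δ → ∀ A, MeasurableSet A →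
      μ ((fun x => x + ∫ r in a..s, b r x) ⁻¹' A) ≤
        ENNReal.ofReal (Real.exp (η * ∫ τ in a..s, m τ)) * μ A)
    (hc : L * δ ≤ c) {T : ℝ} (hT : 0 ≤ T) : ∃ X, IsApproxFlow μ b m η c T X := by
  obtain ⟨N, hN, h⟩ := exists_subdivision hb.int hT hδ
  have key : ∀ k : ℕ, k ≤ N → ∃ X, IsApproxFlow μ b m η c (k * (T / N)) X := by
    intro k
    induction k with
    | zero => intro _; exact ⟨_, by simpa using isApproxFlow_zero hb η c⟩
    | succ k ih =>
      intro hk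
      obtain ⟨X, hX⟩ := ih (by omega)
      refine hX.step hb hL hlip hdens hc (by positivity) ?_ (h k (by omega))
      push_cast; gcongr; linarith
  obtain ⟨X, hX⟩ := key N le_rfl
  have : (N : ℝ) * (T / N) = T := by field_simp
  exact ⟨X, this ▸ hX⟩

/-- Measure-quasi-preserving approximate flows for mollified divergence-free fields. -/
theorem exists_mollified_flow {W : ℝ → E → E} {m : ℝ → ℝ} (hW : IsDominated W m)
    (hdiv : ∀ t, IsDivFree μ (W t)) {ρ : E → ℝ} (hρ : ContDiff ℝ ∞ ρ) (hρc : HasCompactSupport ρ)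
    (hρ0 : ∀ z, 0 ≤ ρ z) (hρ1 : ∫ z, ρ z ∂μ = 1) {T : ℝ} (hT : 0 ≤ T) {κ : ℝ} (hκ : 0 < κ) :
    ∃ X : ℝ → E → E, (∀ s, Measurable (X s)) ∧ (∀ x, X 0 x = x) ∧
      (∀ x r s, r ≤ s → ‖X s x - X r x‖ ≤ ∫ τ in r..s, m τ) ∧
      (∀ s, 0 ≤ s → ∀ A, MeasurableSet A →
        μ (X s ⁻¹' A) ≤ ENNReal.ofReal (Real.exp 1) * μ A) ∧
      ∀ t ∈ Icc 0 T, ∀ x, ‖X t x - x - ∫ r in (0 : ℝ)..t, mollify μ ρ (W r) (X r x)‖ ≤ κ := by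
  set M := ∫ τ in (0 : ℝ)..T, m τ with hM
  have hM0 : 0 ≤ M := hW.integral_nonneg hT
  set L := ∫ z, ‖fderiv ℝ ρ z‖ ∂μ with hL
  have hL0 : 0 ≤ L := integral_nonneg fun _ => norm_nonneg _
  obtain ⟨δ₀, hδ₀, hpre⟩ := exists_measure_preimage_le (μ := μ) hρ hρc
    (show 0 < 1 / (M + 1) by positivity)
  have hρi : Integrable ρ μ := integrable_of_integral_eq_one hρ1
  have hb := hW.mollify hρ.continuous hρ0 hρ1
  set c := κ / (M + 1) with hc
  have hc0 : 0 < c := by positivity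
  obtain ⟨X, hX⟩ := exists_isApproxFlow (μ := μ) hb (η := 1 / (M + 1)) (c := c) (L := L)
    (δ := min δ₀ (c / (L + 1))) hL0
    (fun r y z => mollify_sub_le hρ hρc (hW.measurable_slice r) (hW.bound r) y z)
    (by positivity)
    (fun a s has hδ A hA => by
      simp_rw [← hW.mollify_timeIntegral hρi has]
      exact hpre _ _ (hW.measurable_timeIntegral a s) (hW.isDivFree_timeIntegral hdiv has)
        (fun x => hW.norm_integral_comp_le (γ := fun _ => x) has) (hδ.trans (min_le_left _ _)) A hA)
    (by
      calc L * min δ₀ (c / (L + 1)) ≤ (L + 1) * (c / (L + 1)) := by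
            gcongr
            · linarith
            · exact min_le_right _ _
        _ = c := by field_simp) hT
  have hle : ∀ s, 0 ≤ s → ∫ τ in (0 : ℝ)..(min s T), m τ ≤ M := fun s hs =>
    hW.integral_mono le_rfl (le_min hs hT) (min_le_right _ _)
  refine ⟨X, hX.meas, hX.initial 0 le_rfl, hX.modulus, fun s hs A hA => ?_, fun t ht x => ?_⟩
  · refine (hX.density s hs A hA).trans ?_
    gcongr
    rw [one_div, inv_mul_le_iff₀ (by positivity)]
    linarith [hle s hs]
  · have h := hX.error t ht.1 x
    have h' := hle t ht.1
    rw [min_eq_left ht.2] at h h'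
    refine h.trans ?_
    rw [hc, div_mul_eq_mul_div, div_le_iff₀ (by positivity)]
    gcongr
    linarith

end EulerScheme

section Approximation

variable {E : Type*} [NormedAddCommGroup E] [NormedSpace ℝ E] [FiniteDimensional ℝ E]
  [MeasurableSpace E] [BorelSpace E] {μ : Measure E} [μ.IsAddHaarMeasure]

theorem exists_mollifier_lintegral_le {W : ℝ → E → E} {m : ℝ → ℝ} (hW : IsDominated W m)
    (R : ℝ) {ε : ℝ≥0∞} (hε : 0 < ε) :
    ∃ ρ : E → ℝ, ContDiff ℝ ∞ ρ ∧ HasCompactSupport ρ ∧ (∀ z, 0 ≤ ρ z) ∧ ∫ z, ρ z ∂μ = 1 ∧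
      ∫⁻ r, ∫⁻ x in Metric.closedBall 0 R, ‖mollify μ ρ (W r) x - W r x‖ₑ ∂μ ≤ ε := by
  let φ : ℕ → ContDiffBump (0 : E) := fun n =>
    ⟨1 / (n + 1), 2 / (n + 1), by positivity, by gcongr; norm_num⟩
  have hφ : Tendsto (fun n => (φ n).rOut) atTop (𝓝 0) := by
    have h := (tendsto_one_div_add_atTop_nhds_zero_nat (𝕜 := ℝ)).const_mul 2
    simp only [mul_zero] at h
    refine h.congr fun n => ?_
    change 2 * (1 / ((n : ℝ) + 1)) = 2 / (n + 1)
    ring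
  have hφ' : ∀ᶠ n in atTop, (φ n).rOut ≤ 2 * (φ n).rIn := Eventually.of_forall fun n => by
    change 2 / ((n : ℝ) + 1) ≤ 2 * (1 / (n + 1))
    apply le_of_eq; ring
  have hb : ∀ n, IsDominated (fun t => mollify μ ((φ n).normed μ) (W t)) m := fun n =>
    hW.mollify (φ n).continuous_normed (φ n).nonneg_normed ((φ n).integral_normed (μ := μ))
  have hmeas : ∀ n, Measurable fun p : ℝ × E =>
      ‖mollify μ ((φ n).normed μ) (W p.1) p.2 - W p.1 p.2‖ₑ := fun n =>
    ((hb n).meas.sub hW.meas).enorm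
  have hbound : ∀ n r x, ‖mollify μ ((φ n).normed μ) (W r) x - W r x‖ₑ ≤
      ENNReal.ofReal (2 * m r) := by
    intro n r x
    rw [← ofReal_norm]
    apply ENNReal.ofReal_le_ofReal
    have h1 := (hb n).bound r x
    have h2 := hW.bound r x
    exact (norm_sub_le _ _).trans (by linarith)
  have hball : μ (Metric.closedBall 0 R) ≠ ⊤ := measure_closedBall_lt_top.ne
  have hinner : ∀ r, Tendsto (fun n => ∫⁻ x in Metric.closedBall 0 R,
      ‖mollify μ ((φ n).normed μ) (W r) x - W r x‖ₑ ∂μ) atTop (𝓝 0) := by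
    intro r
    have h := tendsto_lintegral_of_dominated_convergence
      (μ := μ.restrict (Metric.closedBall 0 R))
      (F := fun n x => ‖mollify μ ((φ n).normed μ) (W r) x - W r x‖ₑ) (f := fun _ => 0)
      (fun _ => ENNReal.ofReal (2 * m r)) (fun n => (hmeas n).comp measurable_prodMk_left)
      (fun n => Eventually.of_forall fun x => hbound n r x)
      (by
        rw [lintegral_const, Measure.restrict_apply_univ]
        exact ENNReal.mul_ne_top ENNReal.ofReal_ne_top hball)
      (by
        refine ae_restrict_of_ae ?_
        have hconv := ContDiffBump.ae_convolution_tendsto_right_of_locallyIntegrable (μ := μ) hφ hφ'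
          (locallyIntegrable_of_bounded (hW.measurable_slice r) (hW.bound r))
        filter_upwards [hconv] with x hx
        have h0 := (hx.sub_const (W r x)).enorm
        simpa [mollify_eq_convolution] using h0)
    simpa using h
  have houter := tendsto_lintegral_of_dominated_convergence
      (μ := (volume : Measure ℝ))
      (F := fun n r => ∫⁻ x in Metric.closedBall 0 R,
        ‖mollify μ ((φ n).normed μ) (W r) x - W r x‖ₑ ∂μ) (f := fun _ => 0)
      (fun r => ENNReal.ofReal (2 * m r) * μ (Metric.closedBall 0 R))
      (fun n => (hmeas n).lintegral_prod_right')
      (fun n => Eventually.of_forall fun r => by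
        refine (lintegral_mono fun x => hbound n r x).trans ?_
        simp)
      (by
        rw [lintegral_mul_const' _ _ hball]
        exact ENNReal.mul_ne_top (hW.int.const_mul 2).lintegral_lt_top.ne hball)
      (Eventually.of_forall hinner)
  rw [lintegral_zero] at houter
  obtain ⟨n, hn⟩ := (houter.eventually_le_const hε).exists
  exact ⟨(φ n).normed μ, (φ n).contDiff_normed, (φ n).hasCompactSupport_normed,
    (φ n).nonneg_normed, (φ n).integral_normed, hn⟩

/-- Measure-quasi-preserving approximate flows for divergence-free fields, with an error controlled
by a function of small integral evaluated along the trajectories. -/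
theorem exists_approx_flow {W : ℝ → E → E} {m : ℝ → ℝ} (hW : IsDominated W m)
    (hdiv : ∀ t, IsDivFree μ (W t)) {T : ℝ} (hT : 0 ≤ T) (R : ℝ) {κ : ℝ} (hκ : 0 < κ) :
    ∃ (X : ℝ → E → E) (h : ℝ × E → ℝ≥0∞), (∀ s, Measurable (X s)) ∧ (∀ x, X 0 x = x) ∧
      (∀ x r s, r ≤ s → ‖X s x - X r x‖ ≤ ∫ τ in r..s, m τ) ∧
      (∀ s, 0 ≤ s → ∀ A, MeasurableSet A →
        μ (X s ⁻¹' A) ≤ ENNReal.ofReal (Real.exp 1) * μ A) ∧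
      Measurable h ∧ ∫⁻ p, h p ∂((volume : Measure ℝ).prod μ) ≤ ENNReal.ofReal κ ∧
      ∀ x, (∀ s ∈ Icc 0 T, X s x ∈ Metric.closedBall (0 : E) R) → ∀ t ∈ Icc 0 T,
        ‖X t x - x - ∫ r in (0 : ℝ)..t, W r (X r x)‖ₑ ≤
          ENNReal.ofReal κ + ∫⁻ r in Icc 0 T, h (r, X r x) := by
  obtain ⟨ρ, hρ, hρc, hρ0, hρ1, hle⟩ := exists_mollifier_lintegral_le (μ := μ) hW R
    (ENNReal.ofReal_pos.2 hκ)
  obtain ⟨X, hXm, hX0, hXmod, hXd, hXe⟩ :=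
    exists_mollified_flow (μ := μ) hW hdiv hρ hρc hρ0 hρ1 hT hκ
  have hb := hW.mollify hρ.continuous hρ0 hρ1
  have hmeas : Measurable fun p : ℝ × E => ‖mollify μ ρ (W p.1) p.2 - W p.1 p.2‖ₑ :=
    (hb.meas.sub hW.meas).enorm
  have hS : MeasurableSet {p : ℝ × E | p.2 ∈ Metric.closedBall (0 : E) R} :=
    measurable_snd Metric.isClosed_closedBall.measurableSet
  refine ⟨X, {p : ℝ × E | p.2 ∈ Metric.closedBall (0 : E) R}.indicator
    fun p => ‖mollify μ ρ (W p.1) p.2 - W p.1 p.2‖ₑ, hXm, hX0, hXmod, hXd,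
    hmeas.indicator hS, ?_, fun x hx t ht => ?_⟩
  · rw [lintegral_prod _ (hmeas.indicator hS).aemeasurable]
    refine le_trans (le_of_eq (lintegral_congr fun r => ?_)) hle
    rw [← lintegral_indicator Metric.isClosed_closedBall.measurableSet]
    rfl
  · have hc : Continuous fun r => X r x := hW.continuous_of_modulus (hXmod x)
    have hi1 := hb.integrable_comp hc.measurable
    have hi2 := hW.integrable_comp hc.measurable
    have hsplit : X t x - x - ∫ r in (0 : ℝ)..t, W r (X r x) =
        (X t x - x - ∫ r in (0 : ℝ)..t, mollify μ ρ (W r) (X r x)) +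
          ∫ r in (0 : ℝ)..t, (mollify μ ρ (W r) (X r x) - W r (X r x)) := by
      rw [intervalIntegral.integral_sub hi1.intervalIntegrable hi2.intervalIntegrable]
      abel
    rw [hsplit]
    refine (enorm_add_le _ _).trans (add_le_add ?_ ?_)
    · rw [← ofReal_norm]
      exact ENNReal.ofReal_le_ofReal (hXe t ht x)
    · rw [intervalIntegral.integral_of_le ht.1]
      refine (enorm_integral_le_lintegral_enorm _).trans ?_
      calc _ = ∫⁻ r in Ioc 0 t, {p : ℝ × E | p.2 ∈ Metric.closedBall (0 : E) R}.indicator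
            (fun p => ‖mollify μ ρ (W p.1) p.2 - W p.1 p.2‖ₑ) (r, X r x) := by
            refine setLIntegral_congr_fun measurableSet_Ioc fun r hr => ?_
            have hr' : (r, X r x) ∈ {p : ℝ × E | p.2 ∈ Metric.closedBall (0 : E) R} :=
              hx r ⟨hr.1.le, hr.2.trans ht.2⟩
            simp only [indicator_of_mem hr']
        _ ≤ _ := lintegral_mono_set (Ioc_subset_Icc_self.trans (Icc_subset_Icc_right ht.2))

end Approximation

section Limit

variable {E : Type*} [NormedAddCommGroup E] [NormedSpace ℝ E] [FiniteDimensional ℝ E]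
  [MeasurableSpace E] [BorelSpace E] {μ : Measure E} [μ.IsAddHaarMeasure]

/-- An integrable function is approximated by continuous ones, with errors controlled pointwise by a
single integrable lower semicontinuous function, infinite on a given null set. -/
theorem exists_lowerSemicontinuous_control {α : Type*} [TopologicalSpace α] [R1Space α]
    [WeaklyLocallyCompactSpace α] [NormalSpace α] [MeasurableSpace α] [BorelSpace α]
    {ν : Measure α} [ν.Regular] [SigmaFinite ν] {F : α → E} (hFm : Measurable F)
    (hF : Integrable F ν) {N : Set α} (hN : ν N = 0) :
    ∃ (g : α → ℝ≥0∞) (G : ℕ → α → E), LowerSemicontinuous g ∧ ∫⁻ p, g p ∂ν ≠ ⊤ ∧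
      (∀ p ∈ N, g p = ⊤) ∧ (∀ k, Continuous (G k) ∧ HasCompactSupport (G k)) ∧
      ∀ k p, 2 ^ k * ‖F p - G k p‖ₑ ≤ g p := by
  have hex : ∀ k : ℕ, ∃ G : α → E, HasCompactSupport G ∧
      ∫⁻ p, ‖F p - G p‖ₑ ∂ν ≤ (4⁻¹ : ℝ≥0∞) ^ k ∧ Continuous G ∧ Integrable G ν := fun k =>
    hF.exists_hasCompactSupport_lintegral_sub_le (by simp)
  choose G hGc hGle hG _ using hex
  have hen : ∀ k, Measurable fun p => ‖F p - G k p‖ₑ := fun k =>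
    (hFm.sub (hG k).measurable).enorm
  have hem : ∀ k, Measurable fun p => 2 ^ k * ‖F p - G k p‖ₑ := fun k => (hen k).const_mul _
  set N' := toMeasurable ν N
  have hN'm : MeasurableSet N' := measurableSet_toMeasurable _ _
  have hN' : ν N' = 0 := by rw [measure_toMeasurable, hN]
  set e : α → ℝ≥0∞ := fun p => (∑' k, 2 ^ k * ‖F p - G k p‖ₑ) + N'.indicator (fun _ => ⊤) p
  have hm1 : Measurable fun p => ∑' k, 2 ^ k * ‖F p - G k p‖ₑ := Measurable.tsum hem
  have hem' : Measurable e := hm1.add (measurable_const.indicator hN'm)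
  have he : ∫⁻ p, e p ∂ν ≤ 2 := by
    rw [lintegral_add_left hm1, lintegral_indicator hN'm, setLIntegral_measure_zero _ _ hN',
      add_zero, lintegral_tsum fun k => (hem k).aemeasurable]
    calc ∑' k, ∫⁻ p, 2 ^ k * ‖F p - G k p‖ₑ ∂ν ≤ ∑' k : ℕ, (2⁻¹ : ℝ≥0∞) ^ k := by
          refine ENNReal.tsum_le_tsum fun k => ?_
          rw [lintegral_const_mul _ (hen k)]
          refine (mul_le_mul_right (hGle k) _).trans (le_of_eq ?_)
          rw [← mul_pow]
          congr 1
          rw [show (4 : ℝ≥0∞) = 2 * 2 by norm_num, ENNReal.mul_inv (by simp) (by simp), ← mul_assoc,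
            ENNReal.mul_inv_cancel (by simp) (by simp), one_mul]
      _ = 2 := by rw [ENNReal.tsum_geometric, ENNReal.one_sub_inv_two, inv_inv]
  obtain ⟨g, heg, hg, hgi⟩ := exists_le_lowerSemicontinuous_lintegral_ge ν e hem'
    (ε := 1) one_ne_zero
  refine ⟨g, G, hg, ?_, fun p hp => ?_, fun k => ⟨hG k, hGc k⟩, fun k p => ?_⟩
  · exact ((hgi.trans (add_le_add_left he 1)).trans_lt (by norm_num)).ne
  · refine top_le_iff.1 (le_trans ?_ (heg p))
    simp [e]
    exact Or.inr (subset_toMeasurable ν N hp)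
  · exact le_trans (ENNReal.le_tsum k) (le_self_add.trans (heg p))

/-- Paths with a common modulus of continuity and starting point have a pointwise convergent
subsequence. -/
theorem exists_subseq_tendsto_of_modulus {m : ℝ → ℝ} (hm : Integrable m)
    {T : ℝ} (hT : 0 ≤ T) {R : ℝ} {γ : ℕ → ℝ → E}
    (hball : ∀ n, ∀ t ∈ Icc 0 T, γ n t ∈ Metric.closedBall (0 : E) R)
    (hcont : ∀ n, Continuous (γ n))
    (hmod : ∀ n r s, r ≤ s → ‖γ n s - γ n r‖ ≤ ∫ τ in r..s, m τ) :
    ∃ (φ : ℕ → ℕ) (β : ℝ → E), StrictMono φ ∧ Continuous β ∧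
      ∀ t ∈ Icc 0 T, Tendsto (fun n => γ (φ n) t) atTop (𝓝 (β t)) := by
  let P : ℝ → ℝ := fun t => ∫ τ in (0 : ℝ)..t, m τ
  have hP : Continuous P :=
    intervalIntegral.continuous_primitive (fun _ _ => hm.intervalIntegrable) 0
  have hdist : ∀ n s t, dist (γ n s) (γ n t) ≤ |P s - P t| := by
    intro n s t
    simp only [P]
    rw [intervalIntegral.integral_interval_sub_left hm.intervalIntegrable hm.intervalIntegrable]
    rcases le_total t s with hts | hst
    · rw [dist_eq_norm]
      exact (hmod n t s hts).trans (le_abs_self _)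
    · rw [dist_comm, dist_eq_norm, intervalIntegral.integral_symm, abs_neg]
      exact (hmod n s t hst).trans (le_abs_self _)
  let f : ℕ → BoundedContinuousFunction (Icc (0 : ℝ) T) E := fun n =>
    BoundedContinuousFunction.mkOfCompact ⟨fun t => γ n t, (hcont n).comp continuous_subtype_val⟩
  let A : Set (BoundedContinuousFunction (Icc (0 : ℝ) T) E) :=
    {u | (∀ t, u t ∈ Metric.closedBall (0 : E) R) ∧ ∀ s t, dist (u s) (u t) ≤ |P s - P t|}
  have heval : ∀ t : Icc (0 : ℝ) T,
      Continuous fun u : BoundedContinuousFunction (Icc (0 : ℝ) T) E => u t := fun t =>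
    continuous_eval_const t
  have hA : IsCompact A := by
    refine BoundedContinuousFunction.arzela_ascoli₂ (Metric.closedBall (0 : E) R)
      (isCompact_closedBall _ _) A ?_ (fun u t hu => hu.1 t) ?_
    · have h1 : IsClosed {u : BoundedContinuousFunction (Icc (0 : ℝ) T) E |
          ∀ t, u t ∈ Metric.closedBall (0 : E) R} := by
        rw [Set.ofPred_forall]
        exact isClosed_iInter fun t => Metric.isClosed_closedBall.preimage (heval t)
      have h2 : IsClosed {u : BoundedContinuousFunction (Icc (0 : ℝ) T) E |
          ∀ s t, dist (u s) (u t) ≤ |P s - P t|} := by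
        simp only [Set.ofPred_forall]
        exact isClosed_iInter fun s => isClosed_iInter fun t =>
          isClosed_le ((heval s).dist (heval t)) continuous_const
      exact h1.inter h2
    · intro t
      refine Metric.equicontinuousAt_of_continuity_modulus
        (fun s : Icc (0 : ℝ) T => |P t - P s|) ?_ _
        (Eventually.of_forall fun s (u : A) => u.2.2 t s)
      have h : Continuous fun s : Icc (0 : ℝ) T => |P t - P s| :=
        (continuous_const.sub (hP.comp continuous_subtype_val)).abs
      simpa using h.tendsto t
  obtain ⟨u, _, φ, hφ, hu⟩ := hA.tendsto_subseq (x := f)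
    fun n => ⟨fun t => hball n t t.2, fun s t => hdist n s t⟩
  refine ⟨φ, fun t => u (projIcc 0 T hT t), hφ, u.continuous.comp continuous_projIcc,
    fun t ht => ?_⟩
  have h := ((heval ⟨t, ht⟩).tendsto u).comp hu
  beta_reduce
  rw [projIcc_of_mem hT ht]
  exact h

/-- A limit of approximate solutions is a solution, provided that the trajectories satisfy a uniform
bound forcing the field to be well approximated by continuous fields along them. -/
theorem exists_solution_of_approx {W : ℝ → E → E} {m : ℝ → ℝ} (hW : IsDominated W m)
    {T : ℝ} (hT : 0 ≤ T) {R : ℝ} {g : ℝ × E → ℝ≥0∞} (hg : LowerSemicontinuous g)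
    {G : ℕ → ℝ × E → E} (hG : ∀ k, Continuous (G k) ∧ HasCompactSupport (G k))
    (hgG : ∀ k, ∀ t ∈ Icc 0 T, ∀ y ∈ Metric.closedBall (0 : E) R,
      2 ^ k * ‖W t y - G k (t, y)‖ₑ ≤ g (t, y))
    {x : E} {γ : ℕ → ℝ → E}
    (hball : ∀ n, ∀ t ∈ Icc 0 T, γ n t ∈ Metric.closedBall (0 : E) R)
    (hmod : ∀ n r s, r ≤ s → ‖γ n s - γ n r‖ ≤ ∫ τ in r..s, m τ)
    {L : ℝ≥0∞} (hL : L ≠ ⊤) (hgL : ∀ n, ∫⁻ r in Icc 0 T, g (r, γ n r) ≤ L)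
    {ε : ℕ → ℝ≥0∞} (hε : Tendsto ε atTop (𝓝 0))
    (herr : ∀ n, ∀ t ∈ Icc 0 T, ‖γ n t - x - ∫ r in (0 : ℝ)..t, W r (γ n r)‖ₑ ≤ ε n) :
    ∃ β : ℝ → E, Continuous β ∧ (∀ t ∈ Icc 0 T, β t = x + ∫ r in (0 : ℝ)..t, W r (β r)) ∧
      ∫⁻ r in Icc 0 T, g (r, β r) ≤ L := by
  have hcont : ∀ n, Continuous (γ n) := fun n => hW.continuous_of_modulus (hmod n)
  obtain ⟨φ, β, hφ, hβ, hlim⟩ := exists_subseq_tendsto_of_modulus hW.int hT hball hcont hmod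
  have hβball : ∀ t ∈ Icc 0 T, β t ∈ Metric.closedBall (0 : E) R := fun t ht =>
    Metric.isClosed_closedBall.mem_of_tendsto (hlim t ht)
      (Eventually.of_forall fun n => hball _ t ht)
  have hβL : ∫⁻ r in Icc 0 T, g (r, β r) ≤ L := by
    calc ∫⁻ r in Icc 0 T, g (r, β r)
        ≤ ∫⁻ r in Icc 0 T, liminf (fun n => g (r, γ (φ n) r)) atTop := by
          refine setLIntegral_mono' measurableSet_Icc fun r hr => ?_
          have h1 : Tendsto (fun n => (r, γ (φ n) r)) atTop (𝓝 (r, β r)) :=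
            tendsto_const_nhds.prodMk_nhds (hlim r hr)
          exact (hg.le_liminf (r, β r)).trans h1.liminf_le_liminf_comp
      _ ≤ liminf (fun n => ∫⁻ r in Icc 0 T, g (r, γ (φ n) r)) atTop :=
          lintegral_liminf_le fun n => hg.measurable.comp
            (measurable_id.prodMk (hcont _).measurable)
      _ ≤ L := liminf_le_of_frequently_le' (Frequently.of_forall fun n => hgL _)
  have hdiff : ∀ k (α : ℝ → E), Continuous α →
      (∀ t ∈ Icc 0 T, α t ∈ Metric.closedBall (0 : E) R) → ∫⁻ r in Icc 0 T, g (r, α r) ≤ L →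
      ∀ t ∈ Icc 0 T, ‖(∫ r in (0 : ℝ)..t, W r (α r)) - ∫ r in (0 : ℝ)..t, G k (r, α r)‖ₑ ≤
        2⁻¹ ^ k * L := by
    intro k α hα hαball hαL t ht
    have hGi : IntervalIntegrable (fun r => G k (r, α r)) volume 0 t :=
      ((hG k).1.comp (continuous_id.prodMk hα)).intervalIntegrable _ _
    rw [← intervalIntegral.integral_sub (hW.integrable_comp hα.measurable).intervalIntegrable hGi,
      intervalIntegral.integral_of_le ht.1]
    refine (enorm_integral_le_lintegral_enorm _).trans ?_
    calc ∫⁻ r in Ioc 0 t, ‖W r (α r) - G k (r, α r)‖ₑ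
        ≤ ∫⁻ r in Icc 0 T, ‖W r (α r) - G k (r, α r)‖ₑ :=
          lintegral_mono_set (Ioc_subset_Icc_self.trans (Icc_subset_Icc_right ht.2))
      _ ≤ ∫⁻ r in Icc 0 T, 2⁻¹ ^ k * g (r, α r) := by
          refine setLIntegral_mono' measurableSet_Icc fun r hr => ?_
          refine le_trans (le_of_eq ?_) (mul_le_mul_right (hgG k r hr _ (hαball r hr)) _)
          rw [← mul_assoc, ← mul_pow, ENNReal.inv_mul_cancel (by simp) (by simp), one_pow, one_mul]
      _ = 2⁻¹ ^ k * ∫⁻ r in Icc 0 T, g (r, α r) :=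
          lintegral_const_mul _ (hg.measurable.comp (measurable_id.prodMk hα.measurable))
      _ ≤ 2⁻¹ ^ k * L := by gcongr
  refine ⟨β, hβ, fun t ht => ?_, hβL⟩
  have hkey : ∀ k : ℕ, ‖β t - x - ∫ r in (0 : ℝ)..t, W r (β r)‖ₑ ≤
      2⁻¹ ^ k * L + 2⁻¹ ^ k * L := by
    intro k
    obtain ⟨C, hC⟩ := (hG k).2.exists_bound_of_continuous (hG k).1
    have hGlim : Tendsto (fun n => ∫ r in (0 : ℝ)..t, G k (r, γ (φ n) r)) atTop
        (𝓝 (∫ r in (0 : ℝ)..t, G k (r, β r))) := by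
      refine intervalIntegral.tendsto_integral_filter_of_dominated_convergence (fun _ => C)
        (Eventually.of_forall fun n =>
          ((hG k).1.comp (continuous_id.prodMk (hcont _))).aestronglyMeasurable)
        (Eventually.of_forall fun n => Eventually.of_forall fun r _ => hC _)
        intervalIntegrable_const (Eventually.of_forall fun r hr => ?_)
      rw [uIoc_of_le ht.1] at hr
      exact ((hG k).1.tendsto _).comp
        (tendsto_const_nhds.prodMk_nhds (hlim r ⟨hr.1.le, hr.2.trans ht.2⟩))
    have h1 : ∀ n, ‖γ (φ n) t - x - ∫ r in (0 : ℝ)..t, G k (r, γ (φ n) r)‖ₑ ≤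
        ε (φ n) + 2⁻¹ ^ k * L := by
      intro n
      rw [← sub_add_sub_cancel _ (∫ r in (0 : ℝ)..t, W r (γ (φ n) r))]
      exact (enorm_add_le _ _).trans (add_le_add (herr _ t ht)
        (hdiff k _ (hcont _) (hball _) (hgL _) t ht))
    have h2 : ‖β t - x - ∫ r in (0 : ℝ)..t, G k (r, β r)‖ₑ ≤ 2⁻¹ ^ k * L := by
      have hl := (((hlim t ht).sub_const x).sub hGlim).enorm
      have hr := (hε.comp hφ.tendsto_atTop).add_const (2⁻¹ ^ k * L)
      rw [zero_add] at hr
      exact le_of_tendsto_of_tendsto' hl hr h1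
    rw [← sub_add_sub_cancel _ (∫ r in (0 : ℝ)..t, G k (r, β r))]
    refine (enorm_add_le _ _).trans (add_le_add h2 ?_)
    rw [← enorm_neg, neg_sub]
    exact hdiff k β hβ hβball hβL t ht
  have hzero : Tendsto (fun k : ℕ => (2⁻¹ : ℝ≥0∞) ^ k * L + 2⁻¹ ^ k * L) atTop (𝓝 0) := by
    have h := ENNReal.Tendsto.mul_const
      (ENNReal.tendsto_pow_atTop_nhds_zero_of_lt_one (r := 2⁻¹) (by simp)) (Or.inr hL)
    simpa using h.add h
  have h0 := ge_of_tendsto' hzero hkey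
  have h1 := enorm_eq_zero.1 (le_antisymm h0 zero_le)
  rw [sub_sub, sub_eq_zero] at h1
  exact h1

end Limit

section Existence

variable {E : Type*} [NormedAddCommGroup E] [NormedSpace ℝ E] [FiniteDimensional ℝ E]
  [MeasurableSpace E] [BorelSpace E] {μ : Measure E} [μ.IsAddHaarMeasure]

/-- Integrals along the trajectories of a family of maps of bounded compression. -/
theorem lintegral_comp_flow_le {X : ℝ → E → E} (hX : Measurable (Function.uncurry X)) {c : ℝ≥0∞}
    {T : ℝ} (hd : ∀ s, 0 ≤ s → ∀ A, MeasurableSet A → μ (X s ⁻¹' A) ≤ c * μ A)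
    {f : ℝ × E → ℝ≥0∞} (hf : Measurable f) :
    ∫⁻ x, (∫⁻ r in Icc 0 T, f (r, X r x)) ∂μ ≤ c * ∫⁻ p, f p ∂((volume : Measure ℝ).prod μ) := by
  have hcomp : Measurable (Function.uncurry fun (x : E) (r : ℝ) => f (r, X r x)) :=
    hf.comp (measurable_snd.prodMk (hX.comp measurable_swap))
  have hslice : ∀ r, 0 ≤ r → ∫⁻ x, f (r, X r x) ∂μ ≤ c * ∫⁻ y, f (r, y) ∂μ := by
    intro r hr
    have hXr : Measurable (X r) := hX.of_uncurry_left
    have hfr : Measurable fun y => f (r, y) := hf.comp measurable_prodMk_left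
    rw [← lintegral_map (f := fun y => f (r, y)) hfr hXr, ← smul_eq_mul c, ← lintegral_smul_measure]
    refine lintegral_mono' (Measure.le_iff.2 fun A hA => ?_) le_rfl
    rw [Measure.map_apply hXr hA]
    exact hd r hr A hA
  rw [lintegral_lintegral_swap hcomp.aemeasurable, lintegral_prod _ hf.aemeasurable]
  have hm : Measurable fun r => ∫⁻ y, f (r, y) ∂μ := hf.lintegral_prod_right'
  calc ∫⁻ r in Icc 0 T, ∫⁻ x, f (r, X r x) ∂μ
      ≤ ∫⁻ r in Icc 0 T, c * ∫⁻ y, f (r, y) ∂μ :=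
        setLIntegral_mono' measurableSet_Icc fun r hr => hslice r hr.1
    _ ≤ ∫⁻ r, c * ∫⁻ y, f (r, y) ∂μ := setLIntegral_le_lintegral _ _
    _ = c * ∫⁻ r, ∫⁻ y, f (r, y) ∂μ := lintegral_const_mul _ hm

/-- The truncation of a dominated field to a ball is integrable in space-time. -/
theorem IsDominated.integrable_indicator {W : ℝ → E → E} {m : ℝ → ℝ} (hW : IsDominated W m)
    (R : ℝ) : Integrable ({p : ℝ × E | p.2 ∈ Metric.closedBall (0 : E) R}.indicator
      (Function.uncurry W)) ((volume : Measure ℝ).prod μ) := by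
  have hS : MeasurableSet (Metric.closedBall (0 : E) R) := Metric.isClosed_closedBall.measurableSet
  have h1 : Integrable ((Metric.closedBall (0 : E) R).indicator fun _ => (1 : ℝ)) μ :=
    (integrable_indicator_iff hS).2
      (integrableOn_const (isCompact_closedBall (0 : E) R).measure_lt_top.ne)
  refine (hW.int.mul_prod h1).mono' (hW.meas.indicator (measurable_snd hS)).aestronglyMeasurable
    (Eventually.of_forall fun p => ?_)
  by_cases hp : p.2 ∈ Metric.closedBall (0 : E) R
  · rw [indicator_of_mem (s := {p : ℝ × E | p.2 ∈ Metric.closedBall (0 : E) R}) hp,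
      indicator_of_mem hp, mul_one]
    exact hW.bound p.1 p.2
  · rw [indicator_of_notMem (s := {p : ℝ × E | p.2 ∈ Metric.closedBall (0 : E) R}) hp,
      indicator_of_notMem hp, mul_zero, norm_zero]

/-- Almost every point of a ball is the starting point of a solution avoiding a given null set. -/
theorem ae_exists_solution_of_mem_ball {W : ℝ → E → E} {m : ℝ → ℝ} (hW : IsDominated W m)
    (hdiv : ∀ t, IsDivFree μ (W t)) {T : ℝ} (hT : 0 ≤ T) {N : Set (ℝ × E)}
    (hN : (volume : Measure ℝ).prod μ N = 0) (R₀ : ℝ) :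
    ∀ᵐ x ∂μ, x ∈ Metric.closedBall (0 : E) R₀ → ∃ γ : ℝ → E, Continuous γ ∧
      (∀ t ∈ Icc 0 T, γ t = x + ∫ r in (0 : ℝ)..t, W r (γ r)) ∧
      ∀ᵐ t ∂volume.restrict (Icc 0 T), (t, γ t) ∉ N := by
  set R := R₀ + ∫ r in (0 : ℝ)..T, m r with hR
  have hS : MeasurableSet {p : ℝ × E | p.2 ∈ Metric.closedBall (0 : E) R} :=
    measurable_snd Metric.isClosed_closedBall.measurableSet
  obtain ⟨g, G, hg, hgi, hgN, hG, hgG⟩ := exists_lowerSemicontinuous_control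
    (hW.meas.indicator hS) (hW.integrable_indicator (μ := μ) R) hN
  choose X h hXm hX0 hXmod hXd hhm hhi hXe using fun n : ℕ =>
    exists_approx_flow (μ := μ) hW hdiv hT R (κ := (1 / 2) ^ n) (by positivity)
  have hκ : ∀ n : ℕ, ENNReal.ofReal ((1 / 2) ^ n) = 2⁻¹ ^ n := by
    intro n
    rw [ENNReal.ofReal_pow (by norm_num), one_div, ENNReal.ofReal_inv_of_pos (by norm_num)]
    simp
  have hpow : ∀ n : ℕ, (2 : ℝ≥0∞) ^ n * 2⁻¹ ^ n = 1 := by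
    intro n
    rw [← mul_pow, ENNReal.mul_inv_cancel (by simp) (by simp), one_pow]
  simp only [hκ] at hhi hXe
  have hXc : ∀ n x, Continuous fun s => X n s x := fun n x => hW.continuous_of_modulus (hXmod n x)
  have hXu : ∀ n, Measurable (Function.uncurry (X n)) := fun n =>
    measurable_uncurry_of_continuous_of_measurable (hXc n) (hXm n)
  set f : ℕ → ℝ × E → ℝ≥0∞ := fun n p => g p + 2 ^ n * h n p
  have hfm : ∀ n, Measurable (f n) := fun n => hg.measurable.add ((hhm n).const_mul _)
  set J : ℕ → E → ℝ≥0∞ := fun n x => ∫⁻ r in Icc 0 T, f n (r, X n r x)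
  have hJm : ∀ n, Measurable (J n) := fun n =>
    Measurable.lintegral_prod_right' (f := fun q : E × ℝ => f n (q.2, X n q.2 q.1))
      ((hfm n).comp (measurable_snd.prodMk ((hXu n).comp measurable_swap)))
  set C : ℝ≥0∞ := ENNReal.ofReal (Real.exp 1) *
    ((∫⁻ p, g p ∂((volume : Measure ℝ).prod μ)) + 1)
  have hC : C ≠ ⊤ := ENNReal.mul_ne_top ENNReal.ofReal_ne_top
    (ENNReal.add_ne_top.2 ⟨hgi, ENNReal.one_ne_top⟩)
  have hJC : ∀ n, ∫⁻ x, J n x ∂μ ≤ C := by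
    intro n
    refine (lintegral_comp_flow_le (hXu n) (hXd n) (hfm n)).trans (mul_le_mul_right ?_ _)
    rw [lintegral_add_left hg.measurable, lintegral_const_mul _ (hhm n)]
    refine add_le_add_right ((mul_le_mul_right (hhi n) _).trans (hpow n).le) _
  have hliminf : ∀ᵐ x ∂μ, liminf (fun n => J n x) atTop < ⊤ :=
    ae_lt_top (.liminf hJm) (((lintegral_liminf_le hJm).trans
      (liminf_le_of_frequently_le' (Frequently.of_forall hJC))).trans_lt hC.lt_top).ne
  filter_upwards [hliminf] with x hx hxR
  obtain ⟨L, hL, hLt⟩ := exists_between hx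
  obtain ⟨φ, hφ, hJL⟩ := extraction_of_frequently_atTop (frequently_lt_of_liminf_lt (h := hL))
  have hball : ∀ n, ∀ t ∈ Icc 0 T, X n t x ∈ Metric.closedBall (0 : E) R := by
    intro n t ht
    rw [mem_closedBall_zero_iff] at hxR ⊢
    have h1 := hXmod n x 0 t ht.1
    rw [hX0] at h1
    calc ‖X n t x‖ = ‖x + (X n t x - x)‖ := by rw [add_sub_cancel]
      _ ≤ ‖x‖ + ‖X n t x - x‖ := norm_add_le _ _
      _ ≤ R := add_le_add hxR (h1.trans (hW.integral_mono le_rfl ht.1 ht.2))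
  have hpath : ∀ n, Measurable fun r => ((r, X n r x) : ℝ × E) := fun n =>
    measurable_id.prodMk (hXc n x).measurable
  have hgL : ∀ n, ∫⁻ r in Icc 0 T, g (r, X (φ n) r x) ≤ L := fun n =>
    (lintegral_mono fun r => le_self_add).trans (hJL n).le
  have hhL : ∀ n, ∫⁻ r in Icc 0 T, h (φ n) (r, X (φ n) r x) ≤ 2⁻¹ ^ φ n * L := by
    intro n
    have h1 : 2 ^ φ n * ∫⁻ r in Icc 0 T, h (φ n) (r, X (φ n) r x) ≤ L := by
      have hm : Measurable fun r => h (φ n) (r, X (φ n) r x) := (hhm _).comp (hpath _)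
      rw [← lintegral_const_mul _ hm]
      exact (lintegral_mono fun r => le_add_self).trans (hJL n).le
    calc _ = 2⁻¹ ^ φ n * (2 ^ φ n * ∫⁻ r in Icc 0 T, h (φ n) (r, X (φ n) r x)) := by
          rw [← mul_assoc, mul_comm (2⁻¹ ^ φ n), hpow, one_mul]
      _ ≤ _ := mul_le_mul_right h1 _
  have hzero : Tendsto (fun n => (2⁻¹ : ℝ≥0∞) ^ φ n + 2⁻¹ ^ φ n * L) atTop (𝓝 0) := by
    have h1 := (ENNReal.tendsto_pow_atTop_nhds_zero_of_lt_one (r := 2⁻¹) (by simp)).comp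
      hφ.tendsto_atTop
    simpa using h1.add (ENNReal.Tendsto.mul_const h1 (Or.inr hLt.ne))
  obtain ⟨β, hβ, hsol, hβL⟩ := exists_solution_of_approx hW hT (R := R) hg hG
    (fun k t _ y hy => by
      have h1 := hgG k (t, y)
      rwa [indicator_of_mem (s := {p : ℝ × E | p.2 ∈ Metric.closedBall (0 : E) R}) hy] at h1)
    (x := x) (γ := fun n s => X (φ n) s x) (fun n => hball (φ n)) (fun n => hXmod (φ n) x)
    hLt.ne hgL hzero
    (fun n t ht => (hXe (φ n) x (hball _) t ht).trans (add_le_add_right (hhL n) _))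
  refine ⟨β, hβ, hsol, ?_⟩
  have hβm : Measurable fun r => g (r, β r) :=
    hg.measurable.comp (measurable_id.prodMk hβ.measurable)
  filter_upwards [ae_lt_top hβm (hβL.trans_lt hLt).ne] with r hr hrN
  exact hr.ne (hgN _ hrN)

/-- Almost every point is the starting point of a solution avoiding a given null set. -/
theorem ae_exists_solution {W : ℝ → E → E} {m : ℝ → ℝ} (hW : IsDominated W m)
    (hdiv : ∀ t, IsDivFree μ (W t)) {T : ℝ} (hT : 0 ≤ T) {N : Set (ℝ × E)}
    (hN : (volume : Measure ℝ).prod μ N = 0) :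
    ∀ᵐ x ∂μ, ∃ γ : ℝ → E, Continuous γ ∧
      (∀ t ∈ Icc 0 T, γ t = x + ∫ r in (0 : ℝ)..t, W r (γ r)) ∧
      ∀ᵐ t ∂volume.restrict (Icc 0 T), (t, γ t) ∉ N := by
  filter_upwards [ae_all_iff.2 fun n : ℕ => ae_exists_solution_of_mem_ball hW hdiv hT hN n]
    with x hx
  obtain ⟨n, hn⟩ := exists_nat_ge ‖x‖
  exact hx n (mem_closedBall_zero_iff.2 hn)

end Existence

section Reduction

variable {E : Type*} [NormedAddCommGroup E] [NormedSpace ℝ E] [FiniteDimensional ℝ E]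
  [MeasurableSpace E] [BorelSpace E] {μ : Measure E} [μ.IsAddHaarMeasure]

theorem measurable_essSup_slice {V : ℝ → E → E} (hV : Measurable (Function.uncurry V)) :
    Measurable fun t => essSup (fun x => ‖V t x‖ₑ) μ := by
  refine measurable_of_Iic fun a => ?_
  have h : (fun t => essSup (fun x => ‖V t x‖ₑ) μ) ⁻¹' Iic a =
      (fun t => μ (Prod.mk t ⁻¹' {p : ℝ × E | a < ‖V p.1 p.2‖ₑ})) ⁻¹' {0} := by
    ext t
    have h1 : μ (Prod.mk t ⁻¹' {p : ℝ × E | a < ‖V p.1 p.2‖ₑ}) = 0 ↔ ∀ᵐ x ∂μ, ‖V t x‖ₑ ≤ a := by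
      simp [ae_iff]
    simp only [mem_preimage, mem_Iic, mem_singleton_iff, h1]
    exact ⟨fun h2 => (ae_le_essSup (f := fun x => ‖V t x‖ₑ)).mono fun x hx => hx.trans h2,
      fun h2 => essSup_le_of_ae_le a h2⟩
  rw [h]
  exact measurable_measure_prodMk_left (measurableSet_lt measurable_const hV.enorm)
    (measurableSet_singleton 0)

/-- A field whose essential suprema are integrable in time agrees almost everywhere with a
dominated one. -/
theorem exists_isDominated_modification {V : ℝ → E → E} {T : ℝ}
    (hV : Measurable (Function.uncurry V))
    (hbound : ∫⁻ t in Icc 0 T, ⨆ x, ‖V t x‖ₑ < ⊤) (hdiv : ∀ t, IsDivFree μ (V t)) :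
    ∃ (W : ℝ → E → E) (m : ℝ → ℝ) (N : Set (ℝ × E)), IsDominated W m ∧
      (∀ t, IsDivFree μ (W t)) ∧ (volume : Measure ℝ).prod μ N = 0 ∧
      ∀ t ∈ Icc 0 T, ∀ x, (t, x) ∉ N → W t x = V t x := by
  set M : ℝ → ℝ≥0∞ := fun t => essSup (fun x => ‖V t x‖ₑ) μ
  have hM : Measurable M := measurable_essSup_slice hV
  have hMi : ∫⁻ t in Icc 0 T, M t ≠ ⊤ := by
    refine ((lintegral_mono fun t => ?_).trans_lt hbound).ne
    exact essSup_le_of_ae_le _ (Eventually.of_forall fun x => le_iSup (fun x => ‖V t x‖ₑ) x)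
  have hVM : ∀ t, ∀ᵐ x ∂μ, ‖V t x‖ₑ ≤ M t := fun t => ae_le_essSup (f := fun x => ‖V t x‖ₑ)
  set D : Set ℝ := Icc 0 T ∩ {t | M t < ⊤}
  have hD : MeasurableSet D := measurableSet_Icc.inter (measurableSet_lt hM measurable_const)
  set A : Set (ℝ × E) := Prod.fst ⁻¹' D ∩ {p | ‖V p.1 p.2‖ₑ ≤ M p.1}
  have hA : MeasurableSet A :=
    (measurable_fst hD).inter (measurableSet_le hV.enorm (hM.comp measurable_fst))
  have hWV : ∀ t ∈ D, ∀ᵐ x ∂μ, (t, x) ∈ A := fun t ht => (hVM t).mono fun x hx => ⟨ht, hx⟩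
  refine ⟨fun t x => A.indicator (Function.uncurry V) (t, x),
    (Icc 0 T).indicator fun t => (M t).toReal, Prod.fst ⁻¹' Icc 0 T ∩ Aᶜ,
    ⟨hV.indicator hA, ?_, fun t x => ?_⟩, fun t => ?_, ?_, fun t ht x hx => ?_⟩
  · exact (integrable_indicator_iff measurableSet_Icc).2
      (integrable_toReal_of_lintegral_ne_top hM.aemeasurable hMi)
  · by_cases h : (t, x) ∈ A
    · rw [indicator_of_mem h, indicator_of_mem h.1.1, ← toReal_enorm]
      exact ENNReal.toReal_mono h.1.2.ne h.2
    · rw [indicator_of_notMem h, norm_zero]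
      exact indicator_nonneg (fun _ _ => ENNReal.toReal_nonneg) t
  · intro u hu huc
    by_cases ht : t ∈ D
    · rw [← hdiv t u hu huc]
      refine integral_congr_ae ((hWV t ht).mono fun x hx => ?_)
      simp only [indicator_of_mem hx, Function.uncurry]
    · have h : ∀ x, (t, x) ∉ A := fun x hx => ht hx.1
      simp [indicator_of_notMem (h _)]
  · rw [Measure.measure_prod_null ((measurable_fst measurableSet_Icc).inter hA.compl)]
    have h := (ae_restrict_iff' measurableSet_Icc).1 (ae_lt_top hM hMi)
    filter_upwards [h] with t ht
    by_cases htT : t ∈ Icc 0 T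
    · refine measure_mono_null (fun x hx => hx.2) (ae_iff.1 (hWV t ⟨htT, ht htT⟩))
    · refine measure_mono_null (fun x hx => ?_) (measure_empty (μ := μ))
      exact htT hx.1
  · have h : (t, x) ∈ A := by
      by_contra hA'
      exact hx ⟨ht, hA'⟩
    exact indicator_of_mem h _

/-- Almost every point is the position at a given time `S` of a solution avoiding a null set. -/
theorem ae_exists_solution_through {W : ℝ → E → E} {m : ℝ → ℝ} (hW : IsDominated W m)
    (hdiv : ∀ t, IsDivFree μ (W t)) {S T : ℝ} (hS : S ∈ Icc 0 T) {N : Set (ℝ × E)}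
    (hN : (volume : Measure ℝ).prod μ N = 0) :
    ∀ᵐ x ∂μ, ∃ γ : ℝ → E, Continuous γ ∧
      (∀ t ∈ Icc 0 T, γ t = x + ∫ r in S..t, W r (γ r)) ∧
      ∀ᵐ t, t ∈ Icc 0 T → (t, γ t) ∉ N := by
  have hW₁ : IsDominated (fun t x => W (S + t) x) fun t => m (S + t) :=
    ⟨hW.meas.comp ((measurable_const.add measurable_fst).prodMk measurable_snd),
      hW.int.comp_add_left S, fun t x => hW.bound _ x⟩
  have hW₂ : IsDominated (fun t x => -W (S - t) x) fun t => m (S - t) :=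
    ⟨(hW.meas.comp ((measurable_const.sub measurable_fst).prodMk measurable_snd)).neg,
      hW.int.comp_sub_left S, fun t x => (norm_neg _).trans_le (hW.bound _ x)⟩
  have hdiv₂ : ∀ t, IsDivFree μ fun x => -W (S - t) x := by
    intro t u hu huc
    simp only [map_neg, integral_neg, hdiv (S - t) u hu huc, neg_zero]
  have hN₁ : (volume : Measure ℝ).prod μ (Prod.map (S + ·) id ⁻¹' N) = 0 :=
    ((measurePreserving_add_left volume S).prod
      (MeasurePreserving.id μ)).quasiMeasurePreserving.preimage_null hN
  have hN₂ : (volume : Measure ℝ).prod μ (Prod.map (S - ·) id ⁻¹' N) = 0 :=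
    ((Measure.measurePreserving_sub_left volume S).prod
      (MeasurePreserving.id μ)).quasiMeasurePreserving.preimage_null hN
  filter_upwards [ae_exists_solution hW₁ (fun t => hdiv _) (sub_nonneg.2 hS.2) hN₁,
    ae_exists_solution hW₂ hdiv₂ hS.1 hN₂] with x hx₁ hx₂
  obtain ⟨γ₁, hγ₁, hsol₁, hav₁⟩ := hx₁
  obtain ⟨γ₂, hγ₂, hsol₂, hav₂⟩ := hx₂
  have h₁ : γ₁ 0 = x := by simpa using hsol₁ 0 ⟨le_rfl, sub_nonneg.2 hS.2⟩
  have h₂ : γ₂ 0 = x := by simpa using hsol₂ 0 ⟨le_rfl, hS.1⟩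
  let γ : ℝ → E := fun t => if S ≤ t then γ₁ (t - S) else γ₂ (S - t)
  have hγ : Continuous γ := by
    refine Continuous.if_le (hγ₁.comp (continuous_id.sub continuous_const))
      (hγ₂.comp (continuous_const.sub continuous_id)) continuous_const continuous_id fun t ht => ?_
    simp [← ht, h₁, h₂]
  have hright : ∀ t, S ≤ t → γ t = γ₁ (t - S) := fun t ht => if_pos ht
  have hleft : ∀ t, t ≤ S → γ t = γ₂ (S - t) := by
    intro t ht
    rcases ht.eq_or_lt with rfl | ht
    · simp [γ, h₁, h₂]
    · exact if_neg ht.not_ge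
  refine ⟨γ, hγ, fun t ht => ?_, ?_⟩
  · rcases le_total S t with hSt | htS
    · rw [hright t hSt, hsol₁ _ ⟨sub_nonneg.2 hSt, sub_le_sub_right ht.2 S⟩]
      have h := intervalIntegral.integral_comp_add_left (a := 0) (b := t - S)
        (fun r => W r (γ r)) S
      rw [add_zero, add_sub_cancel] at h
      rw [← h]
      congr 1
      refine intervalIntegral.integral_congr fun r hr => ?_
      rw [uIcc_of_le (sub_nonneg.2 hSt)] at hr
      simp only [hright (S + r) (le_add_of_nonneg_right hr.1), add_sub_cancel_left]
    · rw [hleft t htS, hsol₂ _ ⟨sub_nonneg.2 htS, sub_le_self S ht.1⟩]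
      have h := intervalIntegral.integral_comp_sub_left (a := 0) (b := S - t)
        (fun r => W r (γ r)) S
      rw [sub_zero, sub_sub_cancel] at h
      rw [intervalIntegral.integral_symm t S, ← h, ← intervalIntegral.integral_neg]
      congr 1
      refine intervalIntegral.integral_congr fun r hr => ?_
      rw [uIcc_of_le (sub_nonneg.2 htS)] at hr
      simp only [hleft (S - r) (sub_le_self S hr.1), sub_sub_cancel]
  · have a₁ := (measurePreserving_sub_right volume S).quasiMeasurePreserving.ae
      ((ae_restrict_iff' measurableSet_Icc).1 hav₁)
    have a₂ := (Measure.measurePreserving_sub_left volume S).quasiMeasurePreserving.ae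
      ((ae_restrict_iff' measurableSet_Icc).1 hav₂)
    filter_upwards [a₁, a₂] with t ht₁ ht₂ ht
    rcases le_total S t with hSt | htS
    · have h := ht₁ ⟨sub_nonneg.2 hSt, sub_le_sub_right ht.2 S⟩
      rw [hright t hSt]
      simpa using h
    · have h := ht₂ ⟨sub_nonneg.2 htS, sub_le_self S ht.1⟩
      rw [hleft t htS]
      simpa using h

end Reduction

/-- if `V` is Borel, divergence-free and
`∫₀ᵀ‖V_t‖_∞dt < ∞`, then for each `S ∈ [0,T]` and Lebesgue-almost every
`x ∈ ℝ^d` there exists an ODE solution `γ` with `γ(S) = x`. -/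
theorem stmt13 (d : ℕ) (T : ℝ) (hT : 0 ≤ T)
    (V : ℝ → EuclideanSpace ℝ (Fin d) → EuclideanSpace ℝ (Fin d))
    (hV : Measurable (Function.uncurry V))
    (hbound : (∫⁻ t in Set.Icc (0:ℝ) T, ⨆ x, (‖V t x‖₊ : ℝ≥0∞)) < ⊤)
    (hdiv : ∀ t : ℝ, ∀ u : EuclideanSpace ℝ (Fin d) → ℝ,
      ContDiff ℝ (⊤ : ℕ∞) u → HasCompactSupport u →
      ∫ x, fderiv ℝ u x (V t x) = 0) :
    ∀ (S : ℝ) (hS : S ∈ Set.Icc (0:ℝ) T),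
      ∀ᵐ x : EuclideanSpace ℝ (Fin d) ∂MeasureTheory.volume,
        ∃ γ : C(Set.Icc (0:ℝ) T, EuclideanSpace ℝ (Fin d)),
          IsSolution T hT V γ ∧ γ ⟨S, hS⟩ = x := by
  intro S hS
  obtain ⟨W, m, N, hW, hWdiv, hN, hWV⟩ :=
    exists_isDominated_modification (μ := volume) hV hbound hdiv
  filter_upwards [ae_exists_solution_through hW hWdiv hS hN] with x hx
  obtain ⟨γ, hγ, hsol, hav⟩ := hx
  refine ⟨⟨fun t => γ t, hγ.comp continuous_subtype_val⟩, fun t => ?_, ?_⟩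
  · have hi : ∀ a b, IntervalIntegrable (fun r => W r (γ r)) volume a b := fun a b =>
      (hW.integrable_comp hγ.measurable).intervalIntegrable
    simp only [ContinuousMap.coe_mk]
    rw [hsol t t.2, hsol 0 ⟨le_rfl, hT⟩, add_sub_add_left_eq_sub,
      intervalIntegral.integral_interval_sub_left (hi _ _) (hi _ _)]
    refine intervalIntegral.integral_congr_ae ?_
    filter_upwards [hav] with s hs hst
    rw [uIoc_of_le t.2.1] at hst
    have hsT : s ∈ Icc 0 T := ⟨hst.1.le, hst.2.trans t.2.2⟩
    rw [projIcc_of_mem hT hsT]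
    exact hWV s hsT _ (hs hsT)
  · simpa using hsol S hS
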